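/- Assume q is even, and let ν be a vector spanning H^⊥ = {v ∈ V : B(v,w) = 0 for all w ∈ H} (then ⟨ν⟩ is the nucleus N of 𝒬 and Q(ν) ≠ 0). If R is a relative hemisystem of Q⁻(2n+1,q) with respect to 𝒬, then every 2-dimensional subspace of V containing ν contains at most one point of R; equivalently, if P and P' are the two singular points on a line through the nucleus N, then P and P' do not both belong to R (so R ∩ R^τ = ∅ for the involution τ fixing H pointwise and N linewise). -/

import Mathlib

noncomputable section

open Module

variable {F V : Type*} [Field F] [AddCommGroup V] [Module F V]

/-- `P` is a singular point of the quadratic form `Q`, i.e. a `1`-dimensional subspace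
spanned by a nonzero singular vector. -/
def IsSingularPoint (Q : QuadraticForm F V) (P : Submodule F V) : Prop :=
  ∃ v : V, v ≠ 0 ∧ Q v = 0 ∧ P = Submodule.span F {v}

/-- A subspace is totally singular if `Q` vanishes identically on it. -/
def TotallySingular (Q : QuadraticForm F V) (W : Submodule F V) : Prop :=
  ∀ v ∈ W, Q v = 0

/-- A generator is a totally singular subspace of (vector space) dimension `n`. -/
def IsGenerator (Q : QuadraticForm F V) (n : ℕ) (g : Submodule F V) : Prop :=
  TotallySingular Q g ∧ finrank F g = n

/-- The restriction of `Q` to the subspace `U` is nondegenerate. -/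
def NondegOn (Q : QuadraticForm F V) (U : Submodule F V) : Prop :=
  ∀ v ∈ U, Q v = 0 → (∀ w ∈ U, QuadraticMap.polar (⇑Q) v w = 0) → v = 0

/-- The quadratic form `Q` is nondegenerate. -/
def Nondeg (Q : QuadraticForm F V) : Prop :=
  ∀ v : V, Q v = 0 → (∀ w : V, QuadraticMap.polar (⇑Q) v w = 0) → v = 0

/-- `Q` has Witt index `n`: every totally singular subspace has dimension at most `n`
and some totally singular subspace has dimension `n`. -/
def HasWittIndex (Q : QuadraticForm F V) (n : ℕ) : Prop :=
  (∀ W : Submodule F V, TotallySingular Q W → finrank F W ≤ n) ∧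
  ∃ W : Submodule F V, TotallySingular Q W ∧ finrank F W = n

/-- A relative `m`-ovoid with respect to the parabolic section cut out by the
hyperplane `H`: a set `R` of singular points not contained in `H` such that every
generator not contained in `H` contains exactly `m` points of `R`. -/
def IsRelativeMOvoid (Q : QuadraticForm F V) (n : ℕ) (H : Submodule F V) (m : ℕ)
    (R : Set (Submodule F V)) : Prop :=
  (∀ P ∈ R, IsSingularPoint Q P ∧ ¬ P ≤ H) ∧
  ∀ g : Submodule F V, IsGenerator Q n g → ¬ g ≤ H → {P ∈ R | P ≤ g}.ncard = m

/-- A relative hemisystem: a relative `m`-ovoid (for some `m`) whose size equals the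
number of singular points outside `H` that do not belong to it. -/
def IsRelativeHemisystem (Q : QuadraticForm F V) (n : ℕ) (H : Submodule F V)
    (R : Set (Submodule F V)) : Prop :=
  (∃ m : ℕ, IsRelativeMOvoid Q n H m R) ∧
  R.ncard = {P : Submodule F V | IsSingularPoint Q P ∧ ¬ P ≤ H ∧ P ∉ R}.ncard

section Helpers
open QuadraticMap Finset

def pp (Q : QuadraticForm F V) (U : Submodule F V) : Submodule F V :=
  LinearMap.BilinForm.orthogonal Q.polarBilin U

lemma mem_pp (Q : QuadraticForm F V) (U : Submodule F V) (v : V) :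
    v ∈ pp Q U ↔ ∀ u ∈ U, polar Q u v = 0 := by
  simp [pp, LinearMap.BilinForm.mem_orthogonal_iff]

lemma mem_pp' (Q : QuadraticForm F V) (U : Submodule F V) (v : V) :
    v ∈ pp Q U ↔ ∀ u ∈ U, polar Q v u = 0 := by
  rw [mem_pp]; simp only [polar_comm (⇑Q) v]

lemma mem_pp_sup (Q : QuadraticForm F V) (U : Submodule F V) (r v : V) :
    v ∈ pp Q (U ⊔ Submodule.span F {r}) ↔ v ∈ pp Q U ∧ polar Q r v = 0 := by
  constructor
  · intro h
    rw [mem_pp] at h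
    refine ⟨(mem_pp _ _ _).2 fun u hu => h u (Submodule.mem_sup_left hu), h r ?_⟩
    exact Submodule.mem_sup_right (Submodule.mem_span_singleton_self r)
  · rintro ⟨h1, h2⟩
    rw [mem_pp] at h1 ⊢
    intro u hu
    obtain ⟨a, ha, b, hb, rfl⟩ := Submodule.mem_sup.1 hu
    obtain ⟨c, rfl⟩ := Submodule.mem_span_singleton.1 hb
    rw [polar_add_left, h1 a ha, polar_smul_left, h2]; simp

lemma mem_pp_span (Q : QuadraticForm F V) (r v : V) :
    v ∈ pp Q (Submodule.span F {r}) ↔ polar Q r v = 0 := by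
  have := mem_pp_sup Q ⊥ r v
  simp only [bot_sup_eq] at this
  rw [this]
  simp [mem_pp]

lemma nondeg_of (Q : QuadraticForm F V) (hB : ∀ v, (∀ w, polar Q v w = 0) → v = 0) :
    LinearMap.Nondegenerate Q.polarBilin := by
  refine ⟨fun v h => hB v (by simpa using h), fun v h => hB v fun w => ?_⟩
  rw [polar_comm]; simpa using h w

lemma finrank_pp [FiniteDimensional F V] (Q : QuadraticForm F V)
    (hB : ∀ v, (∀ w, polar Q v w = 0) → v = 0) (U : Submodule F V) :
    finrank F (pp Q U) + finrank F U = finrank F V := by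
  have := LinearMap.BilinForm.finrank_orthogonal (B := Q.polarBilin) (nondeg_of Q hB) U
  have h2 := U.finrank_le
  rw [pp, this]; omega

open Classical in
lemma card_sub [Fintype F] [Fintype V] (W : Submodule F V) :
    ∑ v : V, (if v ∈ W then (1:ℚ) else 0) = (Fintype.card F : ℚ) ^ finrank F W := by
  have := Module.card_eq_pow_finrank (K := F) (V := W)
  rw [← Nat.cast_pow, ← this, Fintype.card_subtype]
  simp

open Classical in
lemma fiber_card [Fintype F] {M : Type*} [AddCommGroup M] [Module F M] [Fintype M]
    (l : M →ₗ[F] F) (hl : l ≠ 0) (c : F) :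
    (Fintype.card F : ℚ) * ∑ u : M, (if l u = c then (1:ℚ) else 0) = Fintype.card M := by
  have hs : Function.Surjective l := LinearMap.surjective hl
  have key : ∀ d, ∑ u : M, (if l u = d then (1:ℚ) else 0) =
      ∑ u : M, (if l u = c then (1:ℚ) else 0) := by
    intro d
    obtain ⟨x, hx⟩ := hs (d - c)
    rw [← Equiv.sum_comp (Equiv.addRight x)]
    refine Finset.sum_congr rfl fun u _ => ?_
    have : l (u + x) = d ↔ l u = c := by
      rw [map_add, hx]; constructor <;> intro h
      · linear_combination h
      · linear_combination h
    simp only [Equiv.coe_addRight, this]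
  have h1 : ∑ d : F, ∑ u : M, (if l u = d then (1:ℚ) else 0) = Fintype.card M := by
    rw [Finset.sum_comm]; simp
  rw [← h1, Finset.sum_congr rfl fun d _ => key d]
  simp

open Classical in
lemma sum_sub_eq [Fintype V] (W : Submodule F V) (φ : V → ℚ) :
    ∑ u : W, φ u = ∑ v : V, if v ∈ W then φ v else 0 := by
  rw [← Finset.sum_filter]
  exact (Finset.sum_subtype (p := fun v => v ∈ W) _ (by simp) φ).symm

open Classical in
lemma sing_count_aux [Fintype F] [Fintype V] (Q : QuadraticForm F V) (U : Submodule F V)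
    (hU : TotallySingular Q U) :
    (Fintype.card F : ℚ) * ∑ v : V, (if Q v = 0 then (1:ℚ) else 0) =
    (Fintype.card F : ℚ) * ∑ v : V, (if v ∈ pp Q U ∧ Q v = 0 then (1:ℚ) else 0)
      + (Fintype.card V - (Fintype.card F : ℚ) ^ finrank F (pp Q U)) := by
  have hUc : (0:ℚ) < Fintype.card U := by exact_mod_cast Fintype.card_pos
  have h1 : ∀ v : V, (Fintype.card F : ℚ) * ∑ u : U, (if Q (v + u) = 0 then (1:ℚ) else 0) =
      Fintype.card U * ((Fintype.card F : ℚ) * (if v ∈ pp Q U ∧ Q v = 0 then (1:ℚ) else 0)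
        + (1 - if v ∈ pp Q U then 1 else 0)) := by
    intro v
    have hQ : ∀ u : U, Q (v + u) = Q v + polar Q v u := by
      intro u; simp only [polar]; rw [hU u u.2]; ring
    by_cases hv : v ∈ pp Q U
    · have : ∀ u : U, Q (v + u) = Q v := fun u => by
        rw [hQ, (mem_pp' Q U v).1 hv u u.2, add_zero]
      simp only [this, hv, true_and]
      simp; ring
    · let l : U →ₗ[F] F := (Q.polarBilin v).comp U.subtype
      have hl : l ≠ 0 := by
        intro h0
        apply hv
        rw [mem_pp']
        intro u hu
        have := LinearMap.congr_fun h0 ⟨u, hu⟩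
        simpa [l] using this
      have := fiber_card l hl (- Q v)
      have h2 : ∀ u : U, (Q (v + u) = 0) ↔ l u = - Q v := by
        intro u
        rw [hQ]
        simp only [l, LinearMap.comp_apply, Submodule.subtype_apply, polarBilin_apply_apply]
        constructor <;> intro h
        · linear_combination h
        · linear_combination h
      simp only [h2, this, hv]
      simp
  have h2 := Finset.sum_congr (rfl : (univ : Finset V) = univ) fun v _ => h1 v
  rw [← Finset.mul_sum, ← Finset.mul_sum, Finset.sum_comm] at h2
  have h3 : ∀ u : U, ∑ v : V, (if Q (v + u) = 0 then (1:ℚ) else 0) =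
      ∑ v : V, (if Q v = 0 then (1:ℚ) else 0) := fun u =>
    Equiv.sum_comp (Equiv.addRight (u : V)) (fun v => if Q v = 0 then (1:ℚ) else 0)
  simp only [h3] at h2
  rw [Finset.sum_add_distrib, ← Finset.mul_sum, Finset.sum_sub_distrib, card_sub] at h2
  simp only [Finset.sum_const, Finset.card_univ, nsmul_eq_mul, mul_one] at h2
  apply mul_left_cancel₀ hUc.ne'
  linear_combination h2

lemma ts_sup (Q : QuadraticForm F V) (U : Submodule F V) (hU : TotallySingular Q U) (r : V)
    (hr : Q r = 0) (hrU : r ∈ pp Q U) : TotallySingular Q (U ⊔ Submodule.span F {r}) := by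
  intro v hv
  obtain ⟨a, ha, b, hb, rfl⟩ := Submodule.mem_sup.1 hv
  obtain ⟨c, rfl⟩ := Submodule.mem_span_singleton.1 hb
  have h1 : polar Q a r = 0 := (mem_pp _ _ _).1 hrU a ha
  have h2 : polar Q a (c • r) = 0 := by rw [polar_smul_right, h1, smul_zero]
  have h3 : Q (a + c • r) = Q a + Q (c • r) := by
    simp only [polar] at h2; linear_combination h2
  rw [h3, hU a ha, QuadraticMap.map_smul, hr]; simp

lemma finrank_sup_span [FiniteDimensional F V] (U : Submodule F V) (r : V) (hr : r ∉ U) :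
    finrank F (U ⊔ Submodule.span F {r} : Submodule F V) = finrank F U + 1 := by
  have h0 : r ≠ 0 := fun h => hr (h ▸ U.zero_mem)
  have h1 := Submodule.finrank_sup_add_finrank_inf_eq U (Submodule.span F {r})
  have h2 : U ⊓ Submodule.span F {r} = ⊥ := by
    rw [← disjoint_iff]
    exact ((Submodule.disjoint_span_singleton' h0).2 hr)
  rw [h2, finrank_bot, finrank_span_singleton h0] at h1
  omega

lemma ts_pp (Q : QuadraticForm F V) (g : Submodule F V) (hg : TotallySingular Q g) (r : V)
    (hr : r ∈ g) : r ∈ pp Q g := by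
  rw [mem_pp]; intro u hu
  simp only [polar]
  rw [hg _ (g.add_mem hu hr), hg _ hu, hg _ hr]; simp

lemma max_pp [FiniteDimensional F V] (Q : QuadraticForm F V) (n : ℕ) (hQw : HasWittIndex Q n)
    (W : Submodule F V) (hW : TotallySingular Q W) (hn : finrank F W = n) (v : V) :
    v ∈ pp Q W ∧ Q v = 0 ↔ v ∈ W := by
  constructor
  · rintro ⟨h1, h2⟩
    by_contra h
    have := hQw.1 _ (ts_sup Q W hW v h2 h1)
    rw [finrank_sup_span W v h] at this
    omega
  · intro h
    exact ⟨ts_pp Q W hW v h, hW v h⟩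

open Classical in
lemma sing_count [Fintype F] [Fintype V] (n : ℕ) (hV : finrank F V = 2 * n + 2)
    (Q : QuadraticForm F V) (hQw : HasWittIndex Q n)
    (hB : ∀ v, (∀ w, polar Q v w = 0) → v = 0) (U : Submodule F V)
    (hU : TotallySingular Q U) (k : ℕ) (hk : finrank F U + k = n) :
    ∑ v : V, (if v ∈ pp Q U ∧ Q v = 0 then (1:ℚ) else 0) =
      (Fintype.card F : ℚ) ^ (n + 1 + k) + (Fintype.card F : ℚ) ^ n
        - (Fintype.card F : ℚ) ^ (n + 1) := by
  have hq : (0:ℚ) < Fintype.card F := by exact_mod_cast Fintype.card_pos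
  obtain ⟨W, hW, hWn⟩ := hQw.2
  have e1 := sing_count_aux Q U hU
  have e2 := sing_count_aux Q W hW
  simp only [max_pp Q n hQw W hW hWn] at e2
  rw [card_sub] at e2
  have f1 := finrank_pp Q hB U
  have f2 := finrank_pp Q hB W
  have g1 : finrank F (pp Q U) = n + 2 + k := by omega
  have g2 : finrank F (pp Q W) = n + 2 := by omega
  rw [g1] at e1
  rw [g2, hWn] at e2
  apply mul_left_cancel₀ hq.ne'
  rw [e2] at e1
  ring_nf at e1 ⊢
  linear_combination -e1

open Classical in
def cnt [Fintype (Submodule F V)] (Q : QuadraticForm F V) (n : ℕ) (U : Submodule F V) : ℚ :=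
  ∑ g : Submodule F V, if IsGenerator Q n g ∧ U ≤ g then (1:ℚ) else 0

def aa (q : ℚ) (k : ℕ) : ℚ := ∏ j ∈ Finset.range k, (q ^ (j + 2) + 1)

lemma aa_succ (q : ℚ) (k : ℕ) : aa q (k + 1) = aa q k * (q ^ (k + 2) + 1) := by
  rw [aa, Finset.prod_range_succ, ← aa]

open Classical in
lemma cnt_pt [Fintype (Submodule F V)] (Q : QuadraticForm F V) (n : ℕ) (U : Submodule F V)
    (r : V) :
    ∑ g : Submodule F V, (if (IsGenerator Q n g ∧ U ≤ g) ∧ r ∈ g then (1:ℚ) else 0) =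
      if r ∈ U then cnt Q n U else
        if r ∈ pp Q U ∧ Q r = 0 then cnt Q n (U ⊔ Submodule.span F {r}) else 0 := by
  split_ifs with h1 h2
  · unfold cnt
    refine Finset.sum_congr rfl fun g _ => if_congr ?_ rfl rfl
    exact ⟨fun h => h.1, fun h => ⟨h, h.2 h1⟩⟩
  · unfold cnt
    refine Finset.sum_congr rfl fun g _ => if_congr ?_ rfl rfl
    rw [sup_le_iff, Submodule.span_singleton_le_iff_mem, and_assoc]
  · refine Finset.sum_eq_zero fun g _ => if_neg ?_
    rintro ⟨⟨hg, hU⟩, hr⟩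
    apply h2
    refine ⟨?_, hg.1 r hr⟩
    have := ts_pp Q g hg.1 r hr
    rw [mem_pp] at this ⊢
    exact fun u hu => this u (hU hu)

open Classical in
lemma dbl [Fintype V] [Fintype (Submodule F V)] (Q : QuadraticForm F V) (n : ℕ)
    (U : Submodule F V) (φ : V → ℚ) :
    ∑ g : Submodule F V, (if IsGenerator Q n g ∧ U ≤ g then
      ∑ r : V, (if r ∈ g then φ r else 0) else 0) =
    ∑ r : V, φ r * (if r ∈ U then cnt Q n U else
        if r ∈ pp Q U ∧ Q r = 0 then cnt Q n (U ⊔ Submodule.span F {r}) else 0) := by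
  simp only [← cnt_pt, Finset.mul_sum]
  rw [Finset.sum_comm]
  refine Finset.sum_congr rfl fun g _ => ?_
  by_cases h : IsGenerator Q n g ∧ U ≤ g
  · simp [h]
  · simp [h]

open Classical in
lemma gen_count [Fintype F] [Fintype V] [Fintype (Submodule F V)] (n : ℕ)
    (hV : finrank F V = 2 * n + 2)
    (Q : QuadraticForm F V) (hQw : HasWittIndex Q n)
    (hB : ∀ v, (∀ w, polar Q v w = 0) → v = 0) (k : ℕ) : ∀ (U : Submodule F V),
    TotallySingular Q U → finrank F U + k = n → cnt Q n U = aa (Fintype.card F) k := by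
  have hq : (1:ℚ) < Fintype.card F := by exact_mod_cast Fintype.one_lt_card
  induction k with
  | zero =>
    intro U hU hk
    have : ∀ g : Submodule F V, (IsGenerator Q n g ∧ U ≤ g) ↔ g = U := by
      intro g
      constructor
      · rintro ⟨h1, h2⟩
        refine (Submodule.eq_of_le_of_finrank_le h2 ?_).symm
        rw [h1.2]; omega
      · rintro rfl
        exact ⟨⟨hU, by omega⟩, le_rfl⟩
    simp [cnt, this, aa]
  | succ k ih =>
    intro U hU hk
    have h := dbl Q n U (fun r => if r ∈ U then 0 else 1)
    have hl : ∀ g : Submodule F V, (if IsGenerator Q n g ∧ U ≤ g then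
      ∑ r : V, (if r ∈ g then (if r ∈ U then (0:ℚ) else 1) else 0) else 0) =
      (if IsGenerator Q n g ∧ U ≤ g then (1:ℚ) else 0) *
        ((Fintype.card F : ℚ) ^ n - (Fintype.card F : ℚ) ^ finrank F U) := by
      intro g
      split_ifs with hg
      · rw [one_mul, ← hg.1.2, ← card_sub g, ← card_sub U, ← Finset.sum_sub_distrib]
        refine Finset.sum_congr rfl fun r _ => ?_
        by_cases hrU : r ∈ U
        · simp [hrU, hg.2 hrU]
        · simp [hrU]
      · simp
    have hr : ∀ r : V, (if r ∈ U then (0:ℚ) else 1) * (if r ∈ U then cnt Q n U else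
        if r ∈ pp Q U ∧ Q r = 0 then cnt Q n (U ⊔ Submodule.span F {r}) else 0) =
        ((if r ∈ pp Q U ∧ Q r = 0 then (1:ℚ) else 0) - (if r ∈ U then (1:ℚ) else 0)) *
          aa (Fintype.card F) k := by
      intro r
      by_cases hrU : r ∈ U
      · have h1 := ts_pp Q U hU r hrU
        have h2 := hU r hrU
        simp [hrU, h1, h2]
      · by_cases hp : r ∈ pp Q U ∧ Q r = 0
        · have := ih _ (ts_sup Q U hU r hp.2 hp.1) (by rw [finrank_sup_span U r hrU]; omega)
          simp [hrU, hp, this]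
        · simp [hrU, hp]
    rw [Finset.sum_congr rfl fun g _ => hl g, Finset.sum_congr rfl fun r _ => hr r,
      ← Finset.sum_mul, ← Finset.sum_mul, Finset.sum_sub_distrib, card_sub,
      sing_count n hV Q hQw hB U hU (k+1) hk] at h
    have hne : (Fintype.card F : ℚ) ^ n - (Fintype.card F : ℚ) ^ finrank F U ≠ 0 := by
      have : (Fintype.card F : ℚ) ^ finrank F U < (Fintype.card F : ℚ) ^ n :=
        pow_lt_pow_right₀ hq (by omega)
      linarith
    apply mul_right_cancel₀ hne
    unfold cnt
    rw [h, aa_succ]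
    generalize finrank F U = i at *
    subst hk
    ring

lemma aa_pos (q : ℚ) (hq : 0 < q) (k : ℕ) : 0 < aa q k :=
  Finset.prod_pos fun j _ => by positivity

open Classical in
/-- `D` operator summed over a perp. -/
lemma sum_D [Fintype F] [Fintype V] (Q : QuadraticForm F V)
    (hB : ∀ v, (∀ w, polar Q v w = 0) → v = 0) (Φ : V → ℚ) (h0 : ∑ r, Φ r = 0)
    (U : Submodule F V) (k : ℕ) (hk : finrank F (pp Q U) = k + 1) :
    ∑ v : V, (if v ∈ pp Q U then ∑ r : V, (if polar Q r v = 0 then Φ r else 0) else 0) =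
      ((Fintype.card F : ℚ) ^ (k + 1) - (Fintype.card F : ℚ) ^ k) *
        ∑ r : V, (if r ∈ U then Φ r else 0) := by
  have h1 : ∀ v : V, (if v ∈ pp Q U then ∑ r : V, (if polar Q r v = 0 then Φ r else 0) else 0) =
      ∑ r : V, Φ r * (if v ∈ pp Q (U ⊔ Submodule.span F {r}) then 1 else 0) := by
    intro v
    simp only [mem_pp_sup]
    split_ifs with h <;> simp [h]
  rw [Finset.sum_congr rfl fun v _ => h1 v, Finset.sum_comm]
  simp only [← Finset.mul_sum, card_sub]
  have h2 : ∀ r : V, Φ r * (Fintype.card F : ℚ) ^ finrank F (pp Q (U ⊔ Submodule.span F {r})) =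
      Φ r * (Fintype.card F : ℚ) ^ k + ((Fintype.card F : ℚ) ^ (k + 1) - (Fintype.card F : ℚ) ^ k) *
        (if r ∈ U then Φ r else 0) := by
    intro r
    have f1 := finrank_pp Q hB U
    have f2 := finrank_pp Q hB (U ⊔ Submodule.span F {r})
    by_cases hr : r ∈ U
    · have : U ⊔ Submodule.span F {r} = U := by
        rw [sup_eq_left, Submodule.span_singleton_le_iff_mem]; exact hr
      rw [this, hk]; simp only [hr, if_true]; ring
    · rw [finrank_sup_span U r hr] at f2
      have : finrank F (pp Q (U ⊔ Submodule.span F {r})) = k := by omega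
      rw [this]; simp [hr]
  rw [Finset.sum_congr rfl fun r _ => h2 r, Finset.sum_add_distrib, ← Finset.sum_mul, h0,
    ← Finset.mul_sum]
  ring

open Classical in
lemma sum_span [Fintype F] [Fintype V] (Φ : V → ℚ) (hz : Φ 0 = 0)
    (hhom : ∀ (c : F) v, c ≠ 0 → Φ (c • v) = Φ v) (v : V) (hv : v ≠ 0) :
    ∑ r : V, (if r ∈ Submodule.span F {v} then Φ r else 0) = (Fintype.card F - 1) * Φ v := by
  rw [← sum_sub_eq]
  rw [← Equiv.sum_comp (LinearEquiv.toSpanNonzeroSingleton F V v hv).toEquiv]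
  have : ∀ c : F, Φ ((LinearEquiv.toSpanNonzeroSingleton F V v hv).toEquiv c : V) =
      Φ v - if c = 0 then Φ v else 0 := by
    intro c
    have : ((LinearEquiv.toSpanNonzeroSingleton F V v hv).toEquiv c : V) = c • v := rfl
    rw [this]
    by_cases hc : c = 0
    · simp [hc, hz]
    · simp [hc, hhom]
  rw [Finset.sum_congr rfl fun c _ => this c, Finset.sum_sub_distrib]
  simp; ring

open Classical in
/-- Main analytic step. -/
lemma main_line [Fintype F] [Fintype V] [Fintype (Submodule F V)] (n : ℕ) (hn : 2 ≤ n)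
    (hV : finrank F V = 2 * n + 2)
    (Q : QuadraticForm F V) (hQw : HasWittIndex Q n)
    (hB : ∀ v, (∀ w, polar Q v w = 0) → v = 0)
    (Φ : V → ℚ) (hz : Φ 0 = 0) (hhom : ∀ (c : F) v, c ≠ 0 → Φ (c • v) = Φ v)
    (hs : ∀ v, Q v ≠ 0 → Φ v = 0) (h0 : ∑ r, Φ r = 0)
    (hg : ∀ g, IsGenerator Q n g → ∑ r : V, (if r ∈ g then Φ r else 0) = 0)
    (L : Submodule F V) (hL : finrank F L = 2) (hLH : ∀ v ∈ pp Q L, Φ v = 0) :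
    ∑ r : V, (if r ∈ L then Φ r else 0) = 0 := by
  have hq : (1:ℚ) < Fintype.card F := by exact_mod_cast Fintype.one_lt_card
  set q : ℚ := (Fintype.card F : ℚ) with hqd
  let D : V → ℚ := fun v => ∑ r : V, (if polar Q r v = 0 then Φ r else 0)
  obtain ⟨m, rfl⟩ : ∃ m, n = m + 2 := ⟨n - 2, by omega⟩
  -- eigenvalue property
  have hD : ∀ v, Q v = 0 → D v = - ((q - 1) * q ^ (m+2)) * Φ v := by
    intro v hv
    by_cases hv0 : v = 0
    · subst hv0
      simp [D, hz, h0, polar_zero_right]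
    have hts : TotallySingular Q (Submodule.span F {v}) := by
      intro x hx
      obtain ⟨c, rfl⟩ := Submodule.mem_span_singleton.1 hx
      rw [QuadraticMap.map_smul, hv]; simp
    have hd := dbl Q (m+2) (Submodule.span F {v}) Φ
    have hl : ∀ g : Submodule F V, (if IsGenerator Q (m+2) g ∧ Submodule.span F {v} ≤ g then
      ∑ r : V, (if r ∈ g then Φ r else 0) else 0) = 0 := by
      intro g
      split_ifs with h
      · exact hg g h.1
      · rfl
    rw [Finset.sum_congr rfl fun g _ => hl g, Finset.sum_const_zero] at hd
    have c1 := gen_count (m+2) hV Q hQw hB (m+1) _ hts (by rw [finrank_span_singleton hv0]; omega)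
    have hr : ∀ r : V, Φ r * (if r ∈ Submodule.span F {v} then cnt Q (m+2) (Submodule.span F {v})
        else if r ∈ pp Q (Submodule.span F {v}) ∧ Q r = 0 then
          cnt Q (m+2) (Submodule.span F {v} ⊔ Submodule.span F {r}) else 0) =
        aa q m * (if polar Q r v = 0 then Φ r else 0) +
          aa q m * q ^ (m+2) * (if r ∈ Submodule.span F {v} then Φ r else 0) := by
      intro r
      by_cases hrv : r ∈ Submodule.span F {v}
      · have h1 := ts_pp Q _ hts r hrv
        rw [mem_pp_span, polar_comm] at h1
        simp only [hrv, if_true, h1, c1]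
        rw [aa_succ]
        ring
      · by_cases hp : polar Q r v = 0
        · have hp' : r ∈ pp Q (Submodule.span F {v}) := by rw [mem_pp_span, polar_comm]; exact hp
          by_cases hQr : Q r = 0
          · have c2 := gen_count (m+2) hV Q hQw hB m _ (ts_sup Q _ hts r hQr hp')
              (by rw [finrank_sup_span _ r hrv, finrank_span_singleton hv0]; omega)
            simp only [hrv, if_false, hp', hQr, hp, c2, and_self, if_true]
            ring
          · simp [hs r hQr]
        · have hp' : r ∉ pp Q (Submodule.span F {v}) := by rw [mem_pp_span, polar_comm]; exact hp
          simp [hrv, hp, hp']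
    rw [Finset.sum_congr rfl fun r _ => hr r, Finset.sum_add_distrib, ← Finset.mul_sum,
      ← Finset.mul_sum, sum_span Φ hz hhom v hv0] at hd
    have ha : aa q m ≠ 0 := (aa_pos q (by linarith) m).ne'
    apply mul_left_cancel₀ ha
    change aa q m * (∑ r : V, (if polar Q r v = 0 then Φ r else 0)) = _
    linear_combination -hd
  -- Parseval
  have hP : ∑ v, D v ^ 2 = (q - 1) ^ 2 * q ^ (2 * m + 4) * ∑ r, Φ r ^ 2 := by
    have h1 : ∀ v, D v ^ 2 = ∑ r, Φ r * (if v ∈ pp Q (Submodule.span F {r}) then D v else 0) := by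
      intro v
      rw [pow_two]
      conv_lhs => arg 1; simp only [D]
      rw [Finset.sum_mul]
      refine Finset.sum_congr rfl fun r _ => ?_
      simp only [mem_pp_span]
      split_ifs <;> simp
    rw [Finset.sum_congr rfl fun v _ => h1 v, Finset.sum_comm, Finset.mul_sum]
    refine Finset.sum_congr rfl fun r _ => ?_
    rw [← Finset.mul_sum]
    by_cases hr : r = 0
    · simp [hr, hz]
    have f := finrank_pp Q hB (Submodule.span F {r})
    rw [finrank_span_singleton hr] at f
    have := sum_D Q hB Φ h0 (Submodule.span F {r}) (2 * m + 4) (by omega)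
    rw [sum_span Φ hz hhom r hr] at this
    simp only [D]
    rw [this]
    simp only [← hqd]
    ring
  have hN : ∀ v, Q v ≠ 0 → D v = 0 := by
    have h1 : ∑ v, (D v ^ 2 - (q - 1) ^ 2 * q ^ (2 * m + 4) * Φ v ^ 2) = 0 := by
      rw [Finset.sum_sub_distrib, hP, Finset.mul_sum, sub_self]
    have h2 : ∀ v, D v ^ 2 - (q - 1) ^ 2 * q ^ (2 * m + 4) * Φ v ^ 2 =
        if Q v = 0 then 0 else D v ^ 2 := by
      intro v
      split_ifs with h
      · rw [hD v h]; ring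
      · rw [hs v h]; ring
    rw [Finset.sum_congr rfl fun v _ => h2 v] at h1
    rw [Finset.sum_eq_zero_iff_of_nonneg (fun v _ => by split_ifs <;> positivity)] at h1
    intro v hv
    have := h1 v (Finset.mem_univ v)
    rw [if_neg hv] at this
    exact pow_eq_zero_iff (two_ne_zero) |>.1 this
  have f := finrank_pp Q hB L
  have key := sum_D Q hB Φ h0 L (2 * m + 3) (by omega)
  have hz2 : ∑ v : V, (if v ∈ pp Q L then
      ∑ r : V, (if polar Q r v = 0 then Φ r else 0) else 0) = 0 := by
    refine Finset.sum_eq_zero fun v _ => ?_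
    split_ifs with h
    · by_cases hQv : Q v = 0
      · have := hD v hQv
        rw [hLH v h, mul_zero] at this
        exact this
      · exact hN v hQv
    · rfl
  rw [hz2] at key
  have hne : q ^ (2 * m + 3 + 1) - q ^ (2 * m + 3) ≠ 0 := by
    have : q ^ (2 * m + 3) < q ^ (2 * m + 3 + 1) := pow_lt_pow_right₀ hq (by omega)
    linarith
  exact (mul_eq_zero.1 key.symm).resolve_left hne

lemma ts_span (Q : QuadraticForm F V) (v : V) (hv : Q v = 0) :
    TotallySingular Q (Submodule.span F {v}) := by
  intro x hx
  obtain ⟨c, rfl⟩ := Submodule.mem_span_singleton.1 hx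
  rw [QuadraticMap.map_smul, hv]; simp

lemma rad_triv [Fintype F] [FiniteDimensional F V] (n : ℕ) (hV : finrank F V = 2 * n + 2)
    (Q : QuadraticForm F V) (hQnd : Nondeg Q) (hQw : HasWittIndex Q n)
    (h2 : ringChar F = 2)
    (H : Submodule F V) (ν : V)
    (hνspan : ∀ v : V, (∀ w ∈ H, polar Q v w = 0) → v ∈ Submodule.span F {ν}) :
    ∀ v, (∀ w, polar Q v w = 0) → v = 0 := by
  intro v hv
  by_contra hv0
  have hQv : Q v ≠ 0 := fun h => hv0 (hQnd v h hv)
  obtain ⟨W, hW, hWn⟩ := hQw.2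
  have hd := LinearMap.BilinForm.finrank_add_finrank_orthogonal' (B := Q.polarBilin) W
  have hvW : v ∉ W := fun h => hQv (hW v h)
  have hf := finrank_sup_span W v hvW
  have hex : ∃ x ∈ pp Q W, x ∉ W ⊔ Submodule.span F {v} := by
    by_contra hcon
    push Not at hcon
    have := Submodule.finrank_mono (show pp Q W ≤ W ⊔ Submodule.span F {v} from hcon)
    rw [pp] at this
    omega
  obtain ⟨x, hx, hxn⟩ := hex
  obtain ⟨t, ht⟩ := FiniteField.isSquare_of_char_two h2 (- Q x / Q v)
  have hp : polar Q x (t • v) = 0 := by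
    rw [polar_smul_right, polar_comm, hv]; simp
  have hQ : Q (x + t • v) = 0 := by
    have h3 : Q (x + t • v) = Q x + Q (t • v) := by
      simp only [polar] at hp; linear_combination hp
    rw [h3, QuadraticMap.map_smul, smul_eq_mul, ← ht]
    field_simp; ring
  have hm : x + t • v ∈ pp Q W := by
    refine Submodule.add_mem _ hx (Submodule.smul_mem _ _ ?_)
    rw [mem_pp']; exact fun u _ => hv u
  have := (max_pp Q n hQw W hW hWn _).1 ⟨hm, hQ⟩
  apply hxn
  have h4 : x = (x + t • v) + (-t) • v := by simp
  rw [h4]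
  exact Submodule.add_mem_sup this
    (Submodule.smul_mem _ _ (Submodule.mem_span_singleton_self v))

open Classical in
lemma pts_count [Fintype F] [Fintype V] [Fintype (Submodule F V)] (T : Set (Submodule F V))
    (hT : ∀ P ∈ T, ∃ v : V, v ≠ 0 ∧ P = Submodule.span F {v}) :
    ∑ v : V, (if v ≠ 0 ∧ Submodule.span F {v} ∈ T then (1:ℚ) else 0) =
      (Fintype.card F - 1) * T.ncard := by
  have h1 : ∀ v : V, (if v ≠ 0 ∧ Submodule.span F {v} ∈ T then (1:ℚ) else 0) =
      ∑ P ∈ T.toFinset, if v ≠ 0 ∧ Submodule.span F {v} = P then (1:ℚ) else 0 := by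
    intro v
    by_cases hv : v = 0
    · simp [hv]
    · simp [hv, Finset.sum_ite_eq]
  rw [Finset.sum_congr rfl fun v _ => h1 v, Finset.sum_comm]
  have h2 : ∀ P ∈ T.toFinset, ∑ v : V, (if v ≠ 0 ∧ Submodule.span F {v} = P then (1:ℚ) else 0) =
      Fintype.card F - 1 := by
    intro P hP
    obtain ⟨w, hw, rfl⟩ := hT P (by simpa using hP)
    have h3 : ∀ v : V, (if v ≠ 0 ∧ Submodule.span F {v} = Submodule.span F {w} then (1:ℚ) else 0) =
        (if v ∈ Submodule.span F {w} then (1:ℚ) else 0) - if v = 0 then 1 else 0 := by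
      intro v
      by_cases hv : v = 0
      · simp [hv]
      · have : Submodule.span F {v} = Submodule.span F {w} ↔ v ∈ Submodule.span F {w} := by
          constructor
          · intro h; rw [← h]; exact Submodule.mem_span_singleton_self v
          · intro h
            refine Submodule.eq_of_le_of_finrank_le ?_ ?_
            · rwa [Submodule.span_singleton_le_iff_mem]
            · rw [finrank_span_singleton hv, finrank_span_singleton hw]
        simp [hv, this]
    rw [Finset.sum_congr rfl fun v _ => h3 v, Finset.sum_sub_distrib, card_sub,
      finrank_span_singleton hw]
    simp
  rw [Finset.sum_congr rfl h2, Finset.sum_const, Set.ncard_eq_toFinset_card' T, nsmul_eq_mul]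
  ring

lemma span_smul_eq (c : F) (v : V) (hc : c ≠ 0) :
    Submodule.span F {c • v} = Submodule.span F {v} :=
  Submodule.span_singleton_smul_eq (IsUnit.mk0 c hc) v

lemma pt_props (Q : QuadraticForm F V) (H : Submodule F V) (v : V) 
    (h : IsSingularPoint Q (Submodule.span F {v}) ∧ ¬ Submodule.span F {v} ≤ H) :
    v ≠ 0 ∧ Q v = 0 ∧ v ∉ H := by
  have hvH : v ∉ H := by
    rw [← Submodule.span_singleton_le_iff_mem]; exact h.2
  obtain ⟨w, _, hw, he⟩ := h.1
  refine ⟨fun h0 => hvH (h0 ▸ H.zero_mem), ?_, hvH⟩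
  exact ts_span Q w hw v (he ▸ Submodule.mem_span_singleton_self v)

end Helpers

/-- If `R` is a relative hemisystem of `Q⁻(2n+1,q)`, `q` even, and `ν` spans the
radical `H^⊥` (so `⟨ν⟩` is the nucleus `N` of `𝒬`), then every line through `N`
contains at most one point of `R`; i.e. `R ∩ R^τ = ∅`. -/
theorem statement_9
    (q n : ℕ) [Fintype F] (hq : Fintype.card F = q) (hn : 2 ≤ n)
    (hV : finrank F V = 2 * n + 2)
    (Q : QuadraticForm F V) (hQnd : Nondeg Q) (hQw : HasWittIndex Q n)
    (H : Submodule F V) (hH : finrank F H = 2 * n + 1) (hHnd : NondegOn Q H)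
    (hq2 : Even q)
    (ν : V) (hν0 : ν ≠ 0) (hνperp : ∀ w ∈ H, QuadraticMap.polar (⇑Q) ν w = 0)
    (hνspan : ∀ v : V, (∀ w ∈ H, QuadraticMap.polar (⇑Q) v w = 0) →
      v ∈ Submodule.span F {ν})
    (R : Set (Submodule F V)) (hR : IsRelativeHemisystem Q n H R) :
    ∀ L : Submodule F V, finrank F L = 2 → ν ∈ L → {P ∈ R | P ≤ L}.ncard ≤ 1 := by
  classical
  have hfd : FiniteDimensional F V := FiniteDimensional.of_finrank_pos (by omega)
  have hfin : Finite V := Module.finite_of_finite F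
  have := Fintype.ofFinite V
  have := Fintype.ofFinite (Submodule F V)
  intro L hL hνL
  by_contra hcon
  push Not at hcon
  obtain ⟨P, P', ⟨hPR, hPL⟩, ⟨hPR', hPL'⟩, hne⟩ :=
    (Set.one_lt_ncard_iff (Set.toFinite _)).1 hcon
  have h2 : ringChar F = 2 := by
    rw [FiniteField.even_card_iff_char_two, hq]
    exact Nat.even_iff.1 hq2
  have hB := rad_triv n hV Q hQnd hQw h2 H ν hνspan
  have hHpp : H = pp Q (Submodule.span F {ν}) := by
    refine Submodule.eq_of_le_of_finrank_eq ?_ ?_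
    · intro w hw
      rw [mem_pp_span]; exact hνperp w hw
    · have := finrank_pp Q hB (Submodule.span F {ν})
      rw [finrank_span_singleton hν0] at this
      omega
  have hνH : ν ∈ H := by
    rw [hHpp, mem_pp_span, QuadraticMap.polar_self]
    have : (2 : F) = 0 := by
      have := ringChar.Nat.cast_ringChar (R := F)
      rw [h2] at this
      exact_mod_cast this
    rw [two_nsmul, ← two_mul, this, zero_mul]
  have hQν : Q ν ≠ 0 := fun h => hν0 (hHnd ν hνH h hνperp)
  obtain ⟨⟨m, hRp, hRm⟩, hRc⟩ := hR
  let Φ : V → ℚ := fun v => if Q v = 0 ∧ v ∉ H then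
    (if Submodule.span F {v} ∈ R then 1 else -1) else 0
  have hqq : (1:ℚ) < Fintype.card F := by exact_mod_cast Fintype.one_lt_card
  have hz : Φ 0 = 0 := by simp [Φ]
  have hhom : ∀ (c : F) v, c ≠ 0 → Φ (c • v) = Φ v := by
    intro c v hc
    simp only [Φ, span_smul_eq c v hc, QuadraticMap.map_smul, H.smul_mem_iff hc]
    simp [hc]
  have hs : ∀ v, Q v ≠ 0 → Φ v = 0 := by
    intro v hv; simp [Φ, hv]
  have h0 : ∑ r, Φ r = 0 := by
    have c1 := pts_count R (fun P hP => by
      obtain ⟨v, hv, _, he⟩ := (hRp P hP).1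
      exact ⟨v, hv, he⟩)
    have c2 := pts_count {P : Submodule F V | IsSingularPoint Q P ∧ ¬ P ≤ H ∧ P ∉ R}
      (fun P hP => by
        obtain ⟨v, hv, _, he⟩ := hP.1
        exact ⟨v, hv, he⟩)
    rw [← hRc, ← c1, ← sub_eq_zero, ← Finset.sum_sub_distrib] at c2
    rw [← neg_eq_zero, ← c2, ← Finset.sum_neg_distrib]
    refine Finset.sum_congr rfl fun v _ => ?_
    by_cases hvR : Submodule.span F {v} ∈ R
    · obtain ⟨a, b, c⟩ := pt_props Q H v (hRp _ hvR)
      simp [Φ, hvR, a, b, c]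
    · by_cases hv : Q v = 0 ∧ v ∉ H
      · have hv0 : v ≠ 0 := fun h => hv.2 (h ▸ H.zero_mem)
        have hsp : IsSingularPoint Q (Submodule.span F {v}) := ⟨v, hv0, hv.1, rfl⟩
        simp [Φ, hvR, hv, hv0, hsp]
      · have : ¬ (v ≠ 0 ∧ Submodule.span F {v} ∈
            {P : Submodule F V | IsSingularPoint Q P ∧ ¬ P ≤ H ∧ P ∉ R}) := by
          rintro ⟨_, h1, h2, _⟩
          exact hv (pt_props Q H v ⟨h1, h2⟩).2
        rw [if_neg this]
        simp [Φ, hv, hvR]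
  obtain ⟨k, rfl⟩ : ∃ k, n = k + 1 := ⟨n - 1, by omega⟩
  -- generator sums are constant
  have hgc : ∀ g, IsGenerator Q (k + 1) g → ¬ g ≤ H →
      ∑ r : V, (if r ∈ g then Φ r else 0) = 2 * ((Fintype.card F - 1) * m) -
        ((Fintype.card F : ℚ) ^ (k + 1) - (Fintype.card F : ℚ) ^ k) := by
    intro g hg hgH
    have c1 := pts_count {P ∈ R | P ≤ g} (fun P hP => by
      obtain ⟨v, hv, _, he⟩ := (hRp P hP.1).1
      exact ⟨v, hv, he⟩)
    rw [hRm g hg hgH] at c1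
    have hfr : finrank F (g ⊓ H : Submodule F V) = k := by
      have e := Submodule.finrank_sup_add_finrank_inf_eq g H
      have l1 : finrank F (g ⊔ H : Submodule F V) ≤ finrank F V := Submodule.finrank_le _
      have l2 : finrank F H < finrank F (g ⊔ H : Submodule F V) := by
        apply Submodule.finrank_lt_finrank_of_lt
        refine lt_of_le_of_ne le_sup_right fun h => hgH ?_
        rw [h]; exact le_sup_left
      have := hg.2
      omega
    rw [← c1, ← hfr, ← card_sub (g ⊓ H), hfr, ← hg.2, ← card_sub g, ← Finset.sum_sub_distrib,
      Finset.mul_sum, ← Finset.sum_sub_distrib]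
    refine Finset.sum_congr rfl fun v _ => ?_
    by_cases hvg : v ∈ g
    · have hQv := hg.1 v hvg
      by_cases hvH : v ∈ H
      · have hnR : Submodule.span F {v} ∉ R := fun h => (pt_props Q H v (hRp _ h)).2.2 hvH
        simp [Φ, hvg, hvH, hnR]
      · have hv0 : v ≠ 0 := fun h => hvH (h ▸ H.zero_mem)
        by_cases hvR : Submodule.span F {v} ∈ R
        · simp [Φ, hvg, hvH, hvR, hv0, hQv]; norm_num
        · simp [Φ, hvg, hvH, hvR, hv0, hQv]
    · simp [hvg]
  obtain ⟨p, hp0, hQp, rfl⟩ := (hRp P hPR).1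
  obtain ⟨p', hp0', hQp', rfl⟩ := (hRp P' hPR').1
  have hpH := (pt_props Q H p (hRp _ hPR)).2.2
  -- the constant is zero
  have hc0 : 2 * ((Fintype.card F - 1) * (m:ℚ)) -
        ((Fintype.card F : ℚ) ^ (k + 1) - (Fintype.card F : ℚ) ^ k) = 0 := by
    set C : ℚ := 2 * ((Fintype.card F - 1) * (m:ℚ)) -
        ((Fintype.card F : ℚ) ^ (k + 1) - (Fintype.card F : ℚ) ^ k) with hC
    have hd := dbl Q (k + 1) ⊥ Φ
    have hr : ∀ r : V, Φ r * (if r ∈ (⊥ : Submodule F V) then cnt Q (k + 1) ⊥ else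
        if r ∈ pp Q ⊥ ∧ Q r = 0 then cnt Q (k + 1) (⊥ ⊔ Submodule.span F {r}) else 0) =
        Φ r * aa (Fintype.card F) k := by
      intro r
      by_cases hr0 : r = 0
      · simp [hr0, hz]
      by_cases hQr : Q r = 0
      · have hm : r ∈ pp Q ⊥ := by simp [mem_pp]
        have := gen_count (k + 1) hV Q hQw hB k _ (ts_span Q r hQr)
          (by rw [finrank_span_singleton hr0]; omega)
        simp [hr0, hQr, hm, this]
      · simp [hs r hQr]
    rw [Finset.sum_congr rfl fun r _ => hr r, ← Finset.sum_mul, h0, zero_mul] at hd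
    have hl : ∀ g : Submodule F V, (if IsGenerator Q (k + 1) g ∧ ⊥ ≤ g then
      ∑ r : V, (if r ∈ g then Φ r else 0) else 0) =
        C * (if IsGenerator Q (k + 1) g ∧ ¬ g ≤ H then 1 else 0) := by
      intro g
      by_cases hg : IsGenerator Q (k + 1) g
      · by_cases hgH : g ≤ H
        · simp only [hg, hgH, bot_le, and_self, if_true, not_true_eq_false, and_false, if_false,
            mul_zero]
          refine Finset.sum_eq_zero fun r _ => ?_
          split_ifs with h
          · simp [Φ, hgH h]
          · rfl
        · simp only [hg, hgH, bot_le, and_self, if_true, not_false_eq_true, mul_one]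
          exact hgc g hg hgH
      · simp [hg]
    rw [Finset.sum_congr rfl fun g _ => hl g, ← Finset.mul_sum] at hd
    refine (mul_eq_zero.1 hd).resolve_right ?_
    intro hzero
    rw [Finset.sum_eq_zero_iff_of_nonneg (fun g _ => by split_ifs <;> norm_num)] at hzero
    have hcp := gen_count (k + 1) hV Q hQw hB k _ (ts_span Q p hQp)
          (by rw [finrank_span_singleton hp0]; omega)
    have hcz : cnt Q (k + 1) (Submodule.span F {p}) = 0 := by
      refine Finset.sum_eq_zero fun g hg => ?_
      have := hzero g hg
      split_ifs with h
      · exfalso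
        have hgH : ¬ g ≤ H := fun hh =>
          hpH (hh (h.2 (Submodule.mem_span_singleton_self p)))
        simp [h.1, hgH] at this
      · rfl
    have := aa_pos (Fintype.card F : ℚ) (by linarith) k
    rw [← hcp, hcz] at this
    exact lt_irrefl _ this
  have hg : ∀ g, IsGenerator Q (k + 1) g → ∑ r : V, (if r ∈ g then Φ r else 0) = 0 := by
    intro g hg
    by_cases hgH : g ≤ H
    · refine Finset.sum_eq_zero fun r _ => ?_
      split_ifs with h
      · simp [Φ, hgH h]
      · rfl
    · rw [hgc g hg hgH, hc0]
  have hLH : ∀ v ∈ pp Q L, Φ v = 0 := by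
    intro v hv
    have : v ∈ H := by
      rw [hHpp, mem_pp_span]
      exact (mem_pp _ _ _).1 hv ν hνL
    simp [Φ, this]
  have hfinal := main_line (k + 1) hn hV Q hQw hB Φ hz hhom hs h0 hg L hL hLH
  have hp'n : p' ∉ Submodule.span F {p} := by
    intro h
    apply hne
    refine (Submodule.eq_of_le_of_finrank_eq ?_ ?_).symm
    · rwa [Submodule.span_singleton_le_iff_mem]
    · rw [finrank_span_singleton hp0, finrank_span_singleton hp0']
  have hLe : Submodule.span F {p} ⊔ Submodule.span F {p'} = L := by
    refine Submodule.eq_of_le_of_finrank_eq (sup_le hPL hPL') ?_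
    rw [finrank_sup_span _ _ hp'n, finrank_span_singleton hp0, hL]
  have hpol : QuadraticMap.polar Q p p' ≠ 0 := by
    intro h
    have := ts_sup Q _ (ts_span Q p hQp) p' hQp' ((mem_pp_span _ _ _).2 h)
    rw [hLe] at this
    exact hQν (this ν hνL)
  have hΦ : ∀ r ∈ L, 0 ≤ Φ r := by
    intro r hr
    by_cases hrs : Q r = 0 ∧ r ∉ H
    · have hRr : Submodule.span F {r} ∈ R := by
        rw [← hLe] at hr
        obtain ⟨a, ha, b, hb, rfl⟩ := Submodule.mem_sup.1 hr
        obtain ⟨s, rfl⟩ := Submodule.mem_span_singleton.1 ha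
        obtain ⟨t, rfl⟩ := Submodule.mem_span_singleton.1 hb
        have e : Q (s • p + t • p') = s * t * QuadraticMap.polar Q p p' := by
          have h1 : QuadraticMap.polar Q (s • p) (t • p') = s * t * QuadraticMap.polar Q p p' := by
            rw [QuadraticMap.polar_smul_left, QuadraticMap.polar_smul_right]
            simp only [smul_eq_mul]; ring
          rw [← h1]
          simp [QuadraticMap.polar, QuadraticMap.map_smul, hQp, hQp']
        rw [hrs.1] at e
        have hst := (mul_eq_zero.1 e.symm).resolve_right hpol
        rcases mul_eq_zero.1 hst with rfl | rfl
        · by_cases ht : t = 0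
          · exact absurd (by simp [ht]) hrs.2
          · rw [zero_smul, zero_add, span_smul_eq _ _ ht]; exact hPR'
        · by_cases ht : s = 0
          · exact absurd (by simp [ht]) hrs.2
          · rw [zero_smul, add_zero, span_smul_eq _ _ ht]; exact hPR
      simp [Φ, hrs, hRr]
    · simp [Φ, hrs]
  rw [Finset.sum_eq_zero_iff_of_nonneg (fun r _ => by
    split_ifs with h
    · exact hΦ r h
    · exact le_rfl)] at hfinal
  have hlast := hfinal p (Finset.mem_univ p)
  have hpL : p ∈ L := hPL (Submodule.mem_span_singleton_self p)
  simp [Φ, hpL, hQp, hpH, hPR] at hlast
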